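/- Let δ be the least ordinal with X_δ = X_{δ+1}, let K := B_u ∪ X_δ with the subspace topology, and let g : K → I be the restriction of f_u to K. Then: (1) K is a compact connected space; (2) for every t ∈ I the interior, taken in K, of g⁻¹(t) is contained in B_u; and (3) B_u is not dense in K; consequently the set Ω_g := ⋃_{t ∈ I} Int_K(g⁻¹(t)) is contained in B_u and is not dense in K. -/

import Mathlib

open Set Topology

noncomputable section

/-- A set is an `Fσ` set if it is a countable union of closed sets. -/
def IsFSigma {X : Type*} [TopologicalSpace X] (s : Set X) : Prop :=
  ∃ F : ℕ → Set X, (∀ n, IsClosed (F n)) ∧ s = ⋃ n, F n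

/-- A topological space is an `F`-space if any two disjoint open `Fσ` subsets
have disjoint closures. -/
def IsFSpace (X : Type*) [TopologicalSpace X] : Prop :=
  ∀ s t : Set X, IsOpen s → IsOpen t → IsFSigma s → IsFSigma t → Disjoint s t →
    Disjoint (closure s) (closure t)

/-- `𝐒 = ℕ × [0,1]²` where `ℕ` is discrete and `[0,1]` is the unit interval. -/
abbrev bS : Type := ℕ × (unitInterval × unitInterval)

/-- `βπ : β𝐒 → βℕ`, the Stone–Čech extension of the projection `π(n,x,y) = n`. -/
def betaPi : StoneCech bS → StoneCech ℕ :=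
  stoneCechExtend (continuous_stoneCechUnit.comp continuous_fst)

/-- `βf : β𝐒 → [0,1]`, the Stone–Čech extension of `f(n,x,y) = x`. -/
def betaF : StoneCech bS → unitInterval :=
  stoneCechExtend (continuous_fst.comp continuous_snd)

/-- `S_u = βπ⁻¹(u)`, as a subset of `β𝐒` (carrying the subspace topology). -/
def Su (u : StoneCech ℕ) : Set (StoneCech bS) := betaPi ⁻¹' {u}

/-- `f_u : S_u → [0,1]`, the restriction of `βf` to `S_u`. -/
def fu (u : StoneCech ℕ) : (Su u) → unitInterval := fun z => betaF z.1

/-- `L_t = f_u⁻¹(t) ∩ cl_{S_u} f_u⁻¹([0,t))`. -/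
def Lset (u : StoneCech ℕ) (t : unitInterval) : Set (Su u) :=
  fu u ⁻¹' {t} ∩ closure (fu u ⁻¹' (Set.Ico 0 t))

/-- `R_t = f_u⁻¹(t) ∩ cl_{S_u} f_u⁻¹((t,1])`. -/
def Rset (u : StoneCech ℕ) (t : unitInterval) : Set (Su u) :=
  fu u ⁻¹' {t} ∩ closure (fu u ⁻¹' (Set.Ioc t 1))

/-- The rectangle `P_{s,r} = S_u ∩ cl_{β𝐒}(ℕ × [s,r] × I)`, viewed as a subset of `S_u`. -/
def Pset (u : StoneCech ℕ) (s r : unitInterval) : Set (Su u) :=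
  Subtype.val ⁻¹' closure (stoneCechUnit '' {p : bS | p.2.1 ∈ Set.Icc s r})

/-- `L_{s,t} = cl_{S_u}(⋃_{s<r<t} P_{s,r})`. -/
def Lst (u : StoneCech ℕ) (s t : unitInterval) : Set (Su u) :=
  closure (⋃ r ∈ Set.Ioo s t, Pset u s r)

/-- The interior of `B` in the subspace `A`, viewed as a subset of the ambient space. -/
def relInt {Y : Type*} [TopologicalSpace Y] (A B : Set Y) : Set Y :=
  Subtype.val '' interior ((Subtype.val : A → Y) ⁻¹' B)

/-- The transfinite sequence `X_α ⊆ S_u`: `X_0 = S_u`,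
`X_{α+1} = X_α \ ⋃_{t} Int_{X_α}(X_α ∩ f_u⁻¹(t))`, and `X_λ = ⋂_{β<λ} X_β` at limits. -/
def Xseq (u : StoneCech ℕ) : Ordinal → Set (Su u) := fun α =>
  Ordinal.limitRecOn α Set.univ
    (fun _ Xa => Xa \ ⋃ t : unitInterval, relInt Xa (Xa ∩ fu u ⁻¹' {t}))
    (fun o _ ih => ⋂ (β : {β : Ordinal // β < o}), ih β.1 β.2)

/-- The bottom line `B_u = S_u ∩ cl_{β𝐒}(ℕ × I × {0})`, viewed as a subset of `S_u`. -/
def Bu (u : StoneCech ℕ) : Set (Su u) :=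
  Subtype.val ⁻¹' closure (stoneCechUnit '' {p : bS | p.2.2 = 0})

/-- The top line `T_u = S_u ∩ cl_{β𝐒}(ℕ × I × {1})`, viewed as a subset of `S_u`. -/
def Tu (u : StoneCech ℕ) : Set (Su u) :=
  Subtype.val ⁻¹' closure (stoneCechUnit '' {p : bS | p.2.2 = 1})

/-- The continuum `K = B_u ∪ X_δ`, as a subset of `S_u`. -/
def Kset (u : StoneCech ℕ) (δ : Ordinal) : Set (Su u) := Bu u ∪ Xseq u δ

/-- `g : K → I`, the restriction of `f_u` to `K`. -/
def gK (u : StoneCech ℕ) (δ : Ordinal) : (Kset u δ) → unitInterval :=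
  fun z => fu u z.1

/-!
Write `∂A` for `A` with the interiors, relative to `A`, of the fibres of `f` removed, so that
`X_{α+1} = ∂X_α`, and `acc` for the set of accumulation points. For `U` open and `M`, `A` closed,

  `f(U ∩ ∂A) ⊆ acc f(U ∩ A)`  and  `acc f(M ∩ A) ⊆ f(M ∩ ∂A)`.

By transfinite induction, `f(U) ⊆ f(M)` implies `f(U ∩ X_α) ⊆ f(M ∩ X_α)`, and `f(M) = I` implies
`f(M ∩ X_α) = I`. The latter for `M = T_u` gives a point of `X_δ` off `B_u`. For connectedness,
suppose disjoint open sets `U` and `V ⊇ B_u` cover `B_u ∪ X_δ`. The fibres of `f_u` are connected,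
being decreasing intersections of rectangles `P_{s,r}`, and they meet `B_u`, so a fibre meeting `U`
is not covered by `U ∪ V`; that is, `f(U) ⊆ f(M)` for `M = (U ∪ V)ᶜ`. Hence if `U` meets `X_δ` then
so does `M`, which is absurd.
-/

open Filter

section FiberDeriv

variable {Y Z : Type*} [TopologicalSpace Y]

/-- The derivative of `A` along `f`: the points of `A` near which `f` is not constant on `A`.
It is written with `relInt` so that iterating it gives `Xseq` definitionally. -/
def fiberDeriv (f : Y → Z) (A : Set Y) : Set Y :=
  A \ ⋃ t, relInt A (A ∩ f ⁻¹' {t})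

/-- The transfinite iterates of `fiberDeriv f`, starting from the whole space and taking
intersections at limit ordinals. This is `Xseq` for an arbitrary map. -/
def fiberDerivSeq (f : Y → Z) (α : Ordinal) : Set Y :=
  Ordinal.limitRecOn α univ (fun _ A => fiberDeriv f A)
    (fun o _ ih => ⋂ β : {β : Ordinal // β < o}, ih β.1 β.2)

lemma mem_relInt {A B : Set Y} {y : Y} : y ∈ relInt A B ↔ y ∈ A ∧ B ∈ 𝓝[A] y := by
  constructor
  · rintro ⟨z, hz, rfl⟩
    exact ⟨z.2, preimage_coe_mem_nhds_subtype.1 (mem_interior_iff_mem_nhds.1 hz)⟩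
  · rintro ⟨hyA, hB⟩
    exact ⟨⟨y, hyA⟩, mem_interior_iff_mem_nhds.2 (preimage_coe_mem_nhds_subtype.2 hB), rfl⟩

lemma fiberDeriv_eq_diff_iUnion_eventually (f : Y → Z) (A : Set Y) :
    fiberDeriv f A = A \ ⋃ t, {y | ∀ᶠ x in 𝓝[A] y, f x = t} := by
  ext y
  refine and_congr_right fun hyA => not_congr ?_
  simp only [mem_iUnion, mem_relInt, inter_mem_iff, self_mem_nhdsWithin, true_and, hyA]
  rfl

lemma mem_fiberDeriv {f : Y → Z} {A : Set Y} {y : Y} :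
    y ∈ fiberDeriv f A ↔ y ∈ A ∧ ∃ᶠ x in 𝓝[A] y, f x ≠ f y := by
  rw [fiberDeriv_eq_diff_iUnion_eventually, Set.mem_sdiff]
  refine and_congr_right fun hyA => ?_
  simp only [mem_iUnion, mem_ofPred_eq, Filter.Frequently, not_not]
  refine not_congr ⟨?_, fun h => ⟨f y, h⟩⟩
  rintro ⟨t, ht⟩
  rwa [ht.self_of_nhdsWithin hyA]

lemma fiberDeriv_subset (f : Y → Z) (A : Set Y) : fiberDeriv f A ⊆ A :=
  sdiff_subset

lemma isOpen_eventually_nhdsWithin (A : Set Y) (p : Y → Prop) :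
    IsOpen {y | ∀ᶠ x in 𝓝[A] y, p x} := by
  simp only [eventually_nhdsWithin_iff]
  exact isOpen_setOfPred_eventually_nhds

lemma isClosed_fiberDeriv (f : Y → Z) {A : Set Y} (hA : IsClosed A) :
    IsClosed (fiberDeriv f A) := by
  rw [fiberDeriv_eq_diff_iUnion_eventually]
  exact hA.sdiff (isOpen_iUnion fun t => isOpen_eventually_nhdsWithin A (f · = t))

lemma relInt_union_preimage_singleton_subset {f : Y → Z} {X : Set Y} (hX : X ⊆ fiberDeriv f X)
    (B : Set Y) (t : Z) : relInt (B ∪ X) (f ⁻¹' {t}) ⊆ B := by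
  intro y hy
  obtain ⟨hyK, hconst⟩ := mem_relInt.1 hy
  refine hyK.resolve_right fun hyX => (mem_fiberDeriv.1 (hX hyX)).2 ?_
  have hyt : y ∈ f ⁻¹' {t} := mem_of_mem_nhdsWithin hyK hconst
  filter_upwards [nhdsWithin_mono y subset_union_right hconst] with x hx
  exact not_not.2 (hx.trans hyt.symm)

lemma fiberDerivSeq_zero (f : Y → Z) : fiberDerivSeq f 0 = univ :=
  Ordinal.limitRecOn_zero _ _ _

lemma fiberDerivSeq_add_one (f : Y → Z) (α : Ordinal) :
    fiberDerivSeq f (α + 1) = fiberDeriv f (fiberDerivSeq f α) :=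
  Ordinal.limitRecOn_add_one _ _ _ _

lemma fiberDerivSeq_limit (f : Y → Z) {o : Ordinal} (ho : Order.IsSuccLimit o) :
    fiberDerivSeq f o = ⋂ β : {β : Ordinal // β < o}, fiberDerivSeq f β.1 :=
  Ordinal.limitRecOn_limit _ _ _ _ ho

lemma isClosed_fiberDerivSeq (f : Y → Z) (α : Ordinal) : IsClosed (fiberDerivSeq f α) := by
  induction α using Ordinal.limitRecOn with
  | zero => exact fiberDerivSeq_zero f ▸ isClosed_univ
  | add_one α ih => exact fiberDerivSeq_add_one f α ▸ isClosed_fiberDeriv f ih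
  | limit o ho ih => exact fiberDerivSeq_limit f ho ▸ isClosed_iInter fun β => ih β.1 β.2

lemma antitone_fiberDerivSeq (f : Y → Z) : Antitone (fiberDerivSeq f) := by
  intro α β hαβ
  induction β using Ordinal.limitRecOn with
  | zero => rw [nonpos_iff_eq_zero.1 hαβ]
  | add_one β ih =>
    rcases hαβ.eq_or_lt with rfl | hlt
    · rfl
    · rw [fiberDerivSeq_add_one]
      exact (fiberDeriv_subset f _).trans (ih (Order.lt_add_one_iff.1 hlt))
  | limit o ho _ =>
    rcases hαβ.eq_or_lt with rfl | hlt
    · rfl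
    · rw [fiberDerivSeq_limit f ho]
      exact iInter_subset (fun β : {β // β < o} => fiberDerivSeq f β.1) ⟨α, hlt⟩

end FiberDeriv

section Images

variable {Y Z : Type*} [TopologicalSpace Y] [TopologicalSpace Z] {f : Y → Z}

lemma image_inter_fiberDeriv_subset_derivedSet (hf : Continuous f) {U : Set Y} (hU : IsOpen U)
    (A : Set Y) : f '' (U ∩ fiberDeriv f A) ⊆ derivedSet (f '' (U ∩ A)) := by
  rintro _ ⟨y, ⟨hyU, hyA⟩, rfl⟩
  rw [mem_derivedSet, accPt_iff_nhds]
  intro N hN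
  have hnear : ∀ᶠ x in 𝓝[A] y, x ∈ A ∧ x ∈ U ∧ f x ∈ N :=
    inter_mem self_mem_nhdsWithin
      (mem_nhdsWithin_of_mem_nhds (inter_mem (hU.mem_nhds hyU) (hf.continuousAt hN)))
  obtain ⟨x, hne, hxA, hxU, hxN⟩ := ((mem_fiberDeriv.1 hyA).2.and_eventually hnear).exists
  exact ⟨f x, ⟨hxN, mem_image_of_mem f ⟨hxU, hxA⟩⟩, hne⟩

variable [CompactSpace Y]

lemma mem_image_inter_fiberDerivSeq_of_isSuccLimit [T1Space Z] (hf : Continuous f) {M : Set Y}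
    (hM : IsClosed M) {o : Ordinal} (ho : Order.IsSuccLimit o) {t : Z}
    (h : ∀ β < o, t ∈ f '' (M ∩ fiberDerivSeq f β)) : t ∈ f '' (M ∩ fiberDerivSeq f o) := by
  let C (β : {β : Ordinal // β < o}) : Set Y := M ∩ fiberDerivSeq f β.1 ∩ f ⁻¹' {t}
  have hC_closed (β) : IsClosed (C β) :=
    (hM.inter (isClosed_fiberDerivSeq f β.1)).inter (isClosed_singleton.preimage hf)
  have hC_anti : Antitone C := fun _ _ hab =>
    inter_subset_inter_left _ (inter_subset_inter_right _ (antitone_fiberDerivSeq f hab))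
  have : Nonempty {β : Ordinal // β < o} := ⟨⟨0, ho.bot_lt⟩⟩
  obtain ⟨y, hy⟩ : (⋂ β, C β).Nonempty :=
    IsCompact.nonempty_iInter_of_directed_nonempty_isCompact_isClosed C
      hC_anti.directed_ge (fun β => h β.1 β.2) (fun β => (hC_closed β).isCompact) hC_closed
  rw [mem_iInter] at hy
  refine ⟨y, ⟨(hy ⟨0, ho.bot_lt⟩).1.1, ?_⟩, (hy ⟨0, ho.bot_lt⟩).2⟩
  rw [fiberDerivSeq_limit f ho]
  exact mem_iInter.2 fun β => (hy β).1.2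

variable [T2Space Z]

lemma derivedSet_image_inter_subset (hf : Continuous f) {M A : Set Y} (hM : IsClosed M)
    (hA : IsClosed A) : derivedSet (f '' (M ∩ A)) ⊆ f '' (M ∩ fiberDeriv f A) := by
  intro t ht
  let O : Set Y := {y | ∀ᶠ x in 𝓝[A] y, f x = t}
  have hO : IsOpen O := isOpen_eventually_nhdsWithin A (f · = t)
  have hclosed : IsClosed (f '' ((M ∩ A) \ O)) :=
    (((hM.inter hA).sdiff hO).isCompact.image hf).isClosed
  have hcover : f '' (M ∩ A) \ {t} ⊆ f '' ((M ∩ A) \ O) := by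
    rintro _ ⟨⟨y, hy, rfl⟩, hyt⟩
    exact ⟨y, ⟨hy, fun hyO => hyt (hyO.self_of_nhdsWithin hy.2)⟩, rfl⟩
  have ht_mem : t ∈ f '' ((M ∩ A) \ O) :=
    closure_minimal hcover hclosed
      (mem_closure_iff_clusterPt.2 (accPt_principal_iff_clusterPt.1 ht))
  obtain ⟨y, ⟨⟨hyM, hyA⟩, hyO⟩, rfl⟩ := ht_mem
  exact ⟨y, ⟨hyM, mem_fiberDeriv.2 ⟨hyA, not_eventually.1 hyO⟩⟩, rfl⟩

lemma subset_image_inter_fiberDerivSeq (hf : Continuous f) {M : Set Y} (hM : IsClosed M)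
    {D : Ordinal → Set Z} (hD_anti : Antitone D)
    (hD_succ : ∀ α, D (α + 1) ⊆ derivedSet (D α)) (hD_zero : D 0 ⊆ f '' M) (α : Ordinal) :
    D α ⊆ f '' (M ∩ fiberDerivSeq f α) := by
  induction α using Ordinal.limitRecOn with
  | zero => rwa [fiberDerivSeq_zero, inter_univ]
  | add_one α ih =>
    rw [fiberDerivSeq_add_one]
    exact ((hD_succ α).trans (derivedSet_mono _ _ ih)).trans
      (derivedSet_image_inter_subset hf hM (isClosed_fiberDerivSeq f α))
  | limit o ho ih =>
    exact fun t ht => mem_image_inter_fiberDerivSeq_of_isSuccLimit hf hM ho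
      fun β hβ => ih β hβ (hD_anti hβ.le ht)

lemma image_inter_fiberDerivSeq_subset (hf : Continuous f) {U M : Set Y} (hU : IsOpen U)
    (hM : IsClosed M) (h : f '' U ⊆ f '' M) (α : Ordinal) :
    f '' (U ∩ fiberDerivSeq f α) ⊆ f '' (M ∩ fiberDerivSeq f α) := by
  refine subset_image_inter_fiberDerivSeq (D := fun α => f '' (U ∩ fiberDerivSeq f α)) hf hM
    (fun _ _ hαβ => image_mono (inter_subset_inter_right _ (antitone_fiberDerivSeq f hαβ)))
    (fun α => ?_) ?_ α
  · rw [fiberDerivSeq_add_one]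
    exact image_inter_fiberDeriv_subset_derivedSet hf hU _
  · rwa [fiberDerivSeq_zero, inter_univ]

lemma image_inter_fiberDerivSeq_eq_univ [PerfectSpace Z] (hf : Continuous f) {M : Set Y}
    (hM : IsClosed M) (h : f '' M = univ) (α : Ordinal) :
    f '' (M ∩ fiberDerivSeq f α) = univ :=
  univ_subset_iff.1 <| subset_image_inter_fiberDerivSeq (D := fun _ => univ) hf hM
    antitone_const (fun _ => PerfectSpace.univ_preperfect) h.ge α

end Images

section Connected

variable {Y Z : Type*} [TopologicalSpace Y] [TopologicalSpace Z] {f : Y → Z}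

lemma isPreconnected_preimage_singleton [NormalSpace Y] [T1Space Z] (hf : Continuous f)
    (hf_closed : IsClosedMap f) {t : Z}
    (h : ∀ N ∈ 𝓝 t, ∃ C, IsPreconnected C ∧ f ⁻¹' {t} ⊆ C ∧ C ⊆ f ⁻¹' N) :
    IsPreconnected (f ⁻¹' {t}) := by
  rw [isPreconnected_iff_subset_of_fully_disjoint_closed (isClosed_singleton.preimage hf)]
  intro F G hF hG hFG_cover hFG
  obtain ⟨U, V, hU, hV, hFU, hGV, hUV⟩ := normal_separation hF hG hFG
  have hUV_nhds : U ∪ V ∈ comap f (𝓝 t) := hf_closed.comap_nhds_le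
    ((hU.union hV).mem_nhdsSet.2 (hFG_cover.trans (union_subset_union hFU hGV)))
  obtain ⟨N, hN, hNUV⟩ := hUV_nhds
  obtain ⟨C, hC, htC, hCN⟩ := h N hN
  rcases isPreconnected_iff_subset_of_disjoint.1 hC U V hU hV (hCN.trans hNUV)
    (by rw [hUV.inter_eq, inter_empty]) with hCU | hCV
  · exact .inl fun y hy => (hFG_cover hy).resolve_right
      fun hyG => disjoint_left.1 hUV (hCU (htC hy)) (hGV hyG)
  · exact .inr fun y hy => (hFG_cover hy).resolve_left
      fun hyF => disjoint_left.1 hUV (hFU hyF) (hCV (htC hy))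

variable [CompactSpace Y] [T2Space Z]

lemma fiberDerivSeq_subset_of_subset_union (hf : Continuous f)
    (hfiber : ∀ t, IsPreconnected (f ⁻¹' {t})) {U V : Set Y} (hU : IsOpen U) (hV : IsOpen V)
    (hUV : Disjoint U V) (hVsurj : f '' V = univ) {α : Ordinal}
    (hcover : fiberDerivSeq f α ⊆ U ∪ V) : fiberDerivSeq f α ⊆ V := by
  have himage : f '' U ⊆ f '' (U ∪ V)ᶜ := by
    rintro _ ⟨x, hxU, rfl⟩
    by_contra hx
    have hfiber_cover : f ⁻¹' {f x} ⊆ U ∪ V := fun y hy => by_contra fun hyUV => hx ⟨y, hyUV, hy⟩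
    obtain ⟨b, hbV, hbx⟩ : f x ∈ f '' V := hVsurj ▸ mem_univ _
    have hfiberU : f ⁻¹' {f x} ⊆ U :=
      (hfiber (f x)).subset_left_of_subset_union hU hV hUV hfiber_cover ⟨x, rfl, hxU⟩
    exact disjoint_left.1 hUV (hfiberU hbx) hbV
  refine fun z hz => (hcover hz).resolve_left fun hzU => ?_
  obtain ⟨y, ⟨hyUV, hy⟩, -⟩ := image_inter_fiberDerivSeq_subset hf hU
    (hU.union hV).isClosed_compl himage α (mem_image_of_mem f ⟨hzU, hz⟩)
  exact hyUV (hcover hy)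

lemma isPreconnected_union_fiberDerivSeq [T2Space Y] (hf : Continuous f)
    (hfiber : ∀ t, IsPreconnected (f ⁻¹' {t})) {B : Set Y} (hB_closed : IsClosed B)
    (hB : IsPreconnected B) (hBsurj : f '' B = univ) (α : Ordinal) :
    IsPreconnected (B ∪ fiberDerivSeq f α) := by
  rw [isPreconnected_iff_subset_of_fully_disjoint_closed
    (hB_closed.union (isClosed_fiberDerivSeq f α))]
  intro F G hF hG hcover hFG
  wlog hBG : B ⊆ G generalizing F G
  · have hBF : B ⊆ F := ((isPreconnected_iff_subset_of_fully_disjoint_closed hB_closed).1 hB F G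
      hF hG (subset_union_left.trans hcover) hFG).resolve_right hBG
    exact (this G F hG hF (union_comm F G ▸ hcover) hFG.symm hBF).symm
  obtain ⟨U, V, hU, hV, hFU, hGV, hUV⟩ := normal_separation hF hG hFG
  have hVsurj : f '' V = univ :=
    univ_subset_iff.1 (hBsurj.ge.trans (image_mono (hBG.trans hGV)))
  have hXV : fiberDerivSeq f α ⊆ V :=
    fiberDerivSeq_subset_of_subset_union hf hfiber hU hV hUV hVsurj
      ((subset_union_right.trans hcover).trans (union_subset_union hFU hGV))
  refine .inr (union_subset hBG fun y hy => (hcover (.inr hy)).resolve_left fun hyF => ?_)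
  exact disjoint_left.1 hUV (hFU hyF) (hXV hy)

end Connected

theorem K_compact_connected_Omega_not_dense_general {Y Z : Type*} [TopologicalSpace Y]
    [CompactSpace Y] [T2Space Y] [TopologicalSpace Z] [T2Space Z] [PerfectSpace Z]
    {f : Y → Z} (hf : Continuous f) (hfiber : ∀ t, IsPreconnected (f ⁻¹' {t}))
    {B T : Set Y} (hB_closed : IsClosed B) (hB : IsConnected B) (hBsurj : f '' B = univ)
    (hT_closed : IsClosed T) (hTsurj : f '' T = univ) (hBT : Disjoint B T)
    {δ : Ordinal} (hδ : fiberDerivSeq f δ = fiberDerivSeq f (δ + 1)) :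
    let K := B ∪ fiberDerivSeq f δ
    IsCompact K ∧ IsConnected K ∧
    (∀ t, Subtype.val '' interior (K.domRestrict f ⁻¹' {t}) ⊆ B) ∧
    ¬ Dense ((Subtype.val : K → Y) ⁻¹' B) ∧
    (⋃ t, interior (K.domRestrict f ⁻¹' {t})) ⊆ (Subtype.val : K → Y) ⁻¹' B ∧
    ¬ Dense (⋃ t, interior (K.domRestrict f ⁻¹' {t})) := by
  intro K
  have hInt (t : Z) : Subtype.val '' interior (K.domRestrict f ⁻¹' {t}) ⊆ B :=
    relInt_union_preimage_singleton_subset (fiberDerivSeq_add_one f δ ▸ hδ.le) B t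
  have hOmega : (⋃ t, interior (K.domRestrict f ⁻¹' {t})) ⊆ (Subtype.val : K → Y) ⁻¹' B :=
    iUnion_subset fun t => image_subset_iff.1 (hInt t)
  have hnotDense : ¬ Dense ((Subtype.val : K → Y) ⁻¹' B) := by
    intro hdense
    obtain ⟨b, -⟩ := hB.nonempty
    obtain ⟨y, ⟨hyT, hyX⟩, -⟩ : f b ∈ f '' (T ∩ fiberDerivSeq f δ) :=
      image_inter_fiberDerivSeq_eq_univ hf hT_closed hTsurj δ ▸ mem_univ _
    have hKB := (hB_closed.preimage continuous_subtype_val).closure_eq ▸ hdense.closure_eq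
    exact disjoint_left.1 hBT (hKB.ge (mem_univ (⟨y, .inr hyX⟩ : K))) hyT
  exact ⟨(hB_closed.union (isClosed_fiberDerivSeq f δ)).isCompact,
    ⟨hB.nonempty.inl,
      isPreconnected_union_fiberDerivSeq hf hfiber hB_closed hB.isPreconnected hBsurj δ⟩,
    hInt, hnotDense, hOmega, fun hdense => hnotDense (hdense.mono hOmega)⟩

section StoneCech

variable {X Z : Type*} [TopologicalSpace X] [TopologicalSpace Z] [T2Space Z] [CompactSpace Z]
  {g : X → Z}

lemma closure_stoneCechUnit_image_preimage_subset (hg : Continuous g) {A : Set Z}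
    (hA : IsClosed A) : closure (stoneCechUnit '' (g ⁻¹' A)) ⊆ stoneCechExtend hg ⁻¹' A := by
  refine closure_minimal ?_ (hA.preimage (continuous_stoneCechExtend hg))
  rintro _ ⟨x, hx, rfl⟩
  rwa [mem_preimage, stoneCechExtend_stoneCechUnit]

lemma stoneCechExtend_preimage_interior_subset (hg : Continuous g) (A : Set Z) :
    stoneCechExtend hg ⁻¹' interior A ⊆ closure (stoneCechUnit '' (g ⁻¹' A)) := by
  have hopen : IsOpen (stoneCechExtend hg ⁻¹' interior A) :=
    isOpen_interior.preimage (continuous_stoneCechExtend hg)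
  refine (denseRange_stoneCechUnit.open_subset_closure_inter hopen).trans (closure_mono ?_)
  rintro _ ⟨hx, x, rfl⟩
  rw [mem_preimage, stoneCechExtend_stoneCechUnit] at hx
  exact ⟨x, interior_subset (s := A) hx, rfl⟩

end StoneCech

lemma exists_lt_Icc_mem_nhds_subset {α : Type*} [LinearOrder α] [TopologicalSpace α]
    [OrderTopology α] [PerfectSpace α] {t : α} {N : Set α} (hN : N ∈ 𝓝 t) :
    ∃ s r, s < r ∧ Icc s r ∈ 𝓝 t ∧ Icc s r ⊆ N := by
  obtain ⟨s, r, hst, hnhds, hsub⟩ := exists_Icc_mem_subset_of_mem_nhds hN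
  refine ⟨s, r, (hst.1.trans hst.2).lt_of_ne ?_, hnhds, hsub⟩
  rintro rfl
  rw [Icc_self, ← mem_interior_iff_mem_nhds, interior_singleton] at hnhds
  exact hnhds

section Square

/-- The section of `betaPi` extending `n ↦ (n, x, y)`. It provides a point of each `Su u` lying
over `x` and at height `y`. -/
def constSection (x y : unitInterval) : StoneCech ℕ → StoneCech bS :=
  stoneCechExtend (g := fun n : ℕ => stoneCechUnit (n, (x, y))) continuous_of_discreteTopology

lemma continuous_constSection (x y : unitInterval) : Continuous (constSection x y) :=
  continuous_stoneCechExtend _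

lemma constSection_stoneCechUnit (x y : unitInterval) (n : ℕ) :
    constSection x y (stoneCechUnit n) = stoneCechUnit (n, (x, y)) :=
  stoneCechExtend_stoneCechUnit _ n

lemma betaPi_constSection (x y : unitInterval) (u : StoneCech ℕ) :
    betaPi (constSection x y u) = u := by
  refine congrFun (stoneCech_hom_ext (g₁ := betaPi ∘ constSection x y) (g₂ := id)
    ((continuous_stoneCechExtend _).comp (continuous_constSection x y)) continuous_id ?_) u
  funext n
  simp [constSection_stoneCechUnit, betaPi, stoneCechExtend_stoneCechUnit]

lemma betaF_constSection (x y : unitInterval) (u : StoneCech ℕ) :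
    betaF (constSection x y u) = x := by
  refine congrFun (stoneCech_hom_ext (g₁ := betaF ∘ constSection x y) (g₂ := fun _ => x)
    ((continuous_stoneCechExtend _).comp (continuous_constSection x y)) continuous_const ?_) u
  funext n
  simp [constSection_stoneCechUnit, betaF, stoneCechExtend_stoneCechUnit]

lemma constSection_mem_closure (x y : unitInterval) (u : StoneCech ℕ) :
    constSection x y u ∈ closure (stoneCechUnit '' {p : bS | p.2.2 = y}) := by
  refine map_mem_closure (continuous_constSection x y) (denseRange_stoneCechUnit u) ?_
  rintro _ ⟨n, rfl⟩
  exact ⟨(n, (x, y)), rfl, (constSection_stoneCechUnit x y n).symm⟩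

variable (u : StoneCech ℕ)

instance compactSpace_Su : CompactSpace (Su u) :=
  isCompact_iff_compactSpace.1
    (isClosed_singleton.preimage (continuous_stoneCechExtend _)).isCompact

lemma continuous_fu : Continuous (fu u) :=
  (continuous_stoneCechExtend _).comp continuous_subtype_val

lemma fu_image_level_eq_univ (y : unitInterval) :
    fu u '' (Subtype.val ⁻¹' closure (stoneCechUnit '' {p : bS | p.2.2 = y})) = univ :=
  eq_univ_of_forall fun x => ⟨⟨constSection x y u, betaPi_constSection x y u⟩,
    constSection_mem_closure x y u, betaF_constSection x y u⟩

lemma isClosed_Bu : IsClosed (Bu u) :=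
  isClosed_closure.preimage continuous_subtype_val

lemma isClosed_Tu : IsClosed (Tu u) :=
  isClosed_closure.preimage continuous_subtype_val

lemma Pset_subset_preimage_Icc (s r : unitInterval) : Pset u s r ⊆ fu u ⁻¹' Icc s r :=
  fun _ hz => closure_stoneCechUnit_image_preimage_subset _ isClosed_Icc hz

lemma preimage_interior_Icc_subset_Pset (s r : unitInterval) :
    fu u ⁻¹' interior (Icc s r) ⊆ Pset u s r :=
  fun _ hz => stoneCechExtend_preimage_interior_subset _ _ hz

variable {u}

lemma isPreconnected_fu_fiber
    (hP : ∀ s r : unitInterval, s < r → IsPreconnected (Pset u s r)) (t : unitInterval) :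
    IsPreconnected (fu u ⁻¹' {t}) := by
  refine isPreconnected_preimage_singleton (continuous_fu u) (continuous_fu u).isClosedMap
    fun N hN => ?_
  obtain ⟨s, r, hsr, hnhds, hsub⟩ := exists_lt_Icc_mem_nhds_subset hN
  refine ⟨Pset u s r, hP s r hsr, ?_,
    (Pset_subset_preimage_Icc u s r).trans (preimage_mono hsub)⟩
  exact (preimage_mono (singleton_subset_iff.2 (mem_interior_iff_mem_nhds.2 hnhds))).trans
    (preimage_interior_Icc_subset_Pset u s r)

end Square

/-- For the least `δ` with `X_δ = X_{δ+1}` and `K = B_u ∪ X_δ`: `K` is compact and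
connected, the interior in `K` of every fiber of `g = f_u ∣ K` is contained in `B_u`,
and `B_u` is not dense in `K`; consequently `Ω_g = ⋃_t Int_K g⁻¹(t)` is contained in
`B_u` and is not dense in `K`. -/
theorem K_compact_connected_Omega_not_dense (u : StoneCech ℕ)
    (hu : ∀ n : ℕ, u ≠ stoneCechUnit n)
    (hne : (Su u).Nonempty) (hcomp : IsCompact (Su u)) (hconn : IsConnected (Su u))
    (hFsp : IsFSpace (Su u))
    (hP : ∀ s r : unitInterval, s < r → IsConnected (Pset u s r))
    (hBconn : IsConnected (Bu u)) (hBT : Bu u ∩ Tu u = ∅)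
    (δ : Ordinal) (hδ : Xseq u δ = Xseq u (δ + 1))
    (hmin : ∀ β < δ, Xseq u β ≠ Xseq u (β + 1)) :
    IsCompact (Kset u δ) ∧ IsConnected (Kset u δ) ∧
    (∀ t : unitInterval,
      Subtype.val '' interior (gK u δ ⁻¹' {t}) ⊆ Bu u) ∧
    ¬ Dense ((Subtype.val : (Kset u δ) → (Su u)) ⁻¹' Bu u) ∧
    (⋃ t : unitInterval, interior (gK u δ ⁻¹' {t})) ⊆
      (Subtype.val : (Kset u δ) → (Su u)) ⁻¹' Bu u ∧
    ¬ Dense (⋃ t : unitInterval, interior (gK u δ ⁻¹' {t})) := by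
  exact K_compact_connected_Omega_not_dense_general (continuous_fu u)
    (isPreconnected_fu_fiber fun s r hsr => (hP s r hsr).isPreconnected) (isClosed_Bu u) hBconn
    (fu_image_level_eq_univ u 0) (isClosed_Tu u) (fu_image_level_eq_univ u 1)
    (disjoint_iff_inter_eq_empty.2 hBT) hδ

end
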